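/- Let f : ℝⁿ → ℝ be differentiable with β-Lipschitz gradient (β-smooth). Suppose x, y ∈ ℝⁿ differ only in a single coordinate z (that is, x_i = y_i for all i ≠ z), so that ‖y − x‖ = |y_z − x_z|. Then |f(y) − f(x)| ≤ β|y_z − x_z|² + |∂f/∂x_z (x)| · |y_z − x_z|; that is, the change in the classifier's output between the individual x and its counterfactual y (differing only in the protected attribute z) is bounded by β times the squared change in the protected attribute plus the prediction sensitivity at x times the change in the protected attribute. -/

import Mathlib

/-- **Counterfactual output bound via prediction sensitivity.**
If `f : ℝⁿ → ℝ` is differentiable with a `β`-Lipschitz gradient (`β`-smooth),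
and `x, y` are counterfactual neighbors in coordinate `z` (they agree in every
coordinate except possibly `z`), then the change in the classifier's output is
bounded by `β` times the squared change in the protected attribute plus the
prediction sensitivity at `x` (the absolute partial derivative in coordinate
`z` at `x`) times the change in the protected attribute. -/
theorem counterfactual_output_bound
    {n : ℕ} {β : ℝ} (f : EuclideanSpace ℝ (Fin n) → ℝ)
    (hdiff : Differentiable ℝ f)
    (hsmooth : ∀ x y : EuclideanSpace ℝ (Fin n),
      ‖gradient f y - gradient f x‖ ≤ β * ‖y - x‖)
    (z : Fin n) (x y : EuclideanSpace ℝ (Fin n))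
    (hneighbor : ∀ i : Fin n, i ≠ z → x i = y i) :
    |f y - f x| ≤ β * |y z - x z| ^ 2 + |gradient f x z| * |y z - x z| := by
  have hyx : y - x = EuclideanSpace.single z (y z - x z) := by
    ext i
    by_cases h : i = z
    · subst h; simp
    · simp [h, hneighbor i h]
  have hnorm : ‖y - x‖ = |y z - x z| := by
    rw [hyx]; simp
  obtain ⟨c, hc, hfc⟩ := domain_mvt (f := f) (f' := fderiv ℝ f) (s := Set.univ)
    (x := x) (y := y)
    (fun w _ => (hdiff w).hasFDerivAt.hasFDerivWithinAt) convex_univ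
    (Set.mem_univ x) (Set.mem_univ y)
  have hgrad : fderiv ℝ f c (y - x) = gradient f c z * (y z - x z) := by
    have h1 : fderiv ℝ f c (y - x) = inner ℝ (gradient f c) (y - x) := by
      simp [gradient]
    rw [h1, hyx, EuclideanSpace.inner_single_right]
    simp [mul_comm]
  rw [segment_eq_image'] at hc
  obtain ⟨t, ⟨ht0, ht1⟩, rfl⟩ := hc
  have h0 : 0 ≤ β * ‖y - x‖ := (norm_nonneg _).trans (hsmooth x y)
  have h2 := hsmooth x (x + t • (y - x))
  rw [add_sub_cancel_left, norm_smul, Real.norm_of_nonneg ht0] at h2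
  have h3 := PiLp.norm_apply_le (gradient f (x + t • (y - x)) - gradient f x) z
  rw [PiLp.sub_apply, Real.norm_eq_abs] at h3
  have h4 : |gradient f (x + t • (y - x)) z| ≤ β * |y z - x z| + |gradient f x z| := by
    have h5 := abs_sub_abs_le_abs_sub (gradient f (x + t • (y - x)) z) (gradient f x z)
    rw [← hnorm]
    nlinarith
  rw [hfc, hgrad, abs_mul]
  nlinarith [mul_le_mul_of_nonneg_right h4 (abs_nonneg (y z - x z))]
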